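/- For a supermodular set function V with V(∅) = 0, and any subset S ⊆ N with |S| = r, the proportional-share bound V(S) ≤ (r/|N|)·V(N) holds in expectation: E[V(S)] ≤ (r/c)·V(N) when S is drawn uniformly among r-element subsets; consequently the expected interaction difference ΔI = (r/c)·V(N) − E[V(S)] is nonnegative for supermodular payoffs. -/

import Mathlib

open Finset

theorem aux_core {α : Type*} [DecidableEq α] (V : Finset α → ℝ) (hV0 : V ∅ = 0)
    (hsuper : ∀ A B : Finset α, V A + V B ≤ V (A ∪ B) + V (A ∩ B)) (T : Finset α) :
    ∃ φ : α → ℝ, (∀ S ⊆ T, V S ≤ ∑ x ∈ S, φ x) ∧ ∑ x ∈ T, φ x = V T := by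
  induction T using Finset.induction_on with
  | empty =>
    refine ⟨0, ?_, by simp [hV0]⟩
    intro S hS
    rw [Finset.subset_empty.1 hS]
    simp [hV0]
  | insert a T ha ih =>
    obtain ⟨φ, h1, h2⟩ := ih
    have key : ∀ S : Finset α, a ∉ S →
        ∑ x ∈ S, Function.update φ a (V (insert a T) - V T) x = ∑ x ∈ S, φ x := by
      intro S hS
      refine Finset.sum_congr rfl fun x hx => ?_
      rw [Function.update_of_ne]
      rintro rfl
      exact hS hx
    refine ⟨Function.update φ a (V (insert a T) - V T), ?_, ?_⟩
    · intro S hS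
      by_cases haS : a ∈ S
      · have hsub : S.erase a ⊆ T := by
          intro x hx
          rw [Finset.mem_erase] at hx
          exact (Finset.mem_insert.1 (hS hx.2)).resolve_left hx.1
        rw [← Finset.add_sum_erase S _ haS, key _ (Finset.notMem_erase a S)]
        have h3 := h1 _ hsub
        have h4 := hsuper S T
        have e1 : S ∪ T = insert a T := by grind
        have e2 : S ∩ T = S.erase a := by grind
        rw [e1, e2] at h4
        simp only [Function.update_self]
        linarith
      · rw [key S haS]
        exact h1 S ((Finset.subset_insert_iff_of_notMem haS).1 hS)
    · rw [Finset.sum_insert ha, key T ha, h2]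
      simp

theorem aux_card {α : Type*} [Fintype α] [DecidableEq α] (r : ℕ) (x : α) :
    #{S ∈ (Finset.univ : Finset α).powersetCard (r + 1) | x ∈ S} =
      (Fintype.card α - 1).choose r := by
  have : ({S ∈ (Finset.univ : Finset α).powersetCard (r + 1) | x ∈ S}) =
      ((Finset.univ.erase x).powersetCard r).image (insert x) := by
    ext S
    simp only [Finset.mem_filter, Finset.mem_powersetCard, Finset.mem_image]
    constructor
    · rintro ⟨⟨-, h⟩, hx⟩
      refine ⟨S.erase x, ⟨Finset.erase_subset_erase _ (Finset.subset_univ _), ?_⟩,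
        Finset.insert_erase hx⟩
      rw [Finset.card_erase_of_mem hx, h]
      rfl
    · rintro ⟨U, ⟨hU, hc⟩, rfl⟩
      have hx : x ∉ U := fun h => by simpa using hU h
      refine ⟨⟨Finset.subset_univ _, ?_⟩, Finset.mem_insert_self _ _⟩
      rw [Finset.card_insert_of_notMem hx, hc]
  rw [this, Finset.card_image_of_injOn, Finset.card_powersetCard,
    Finset.card_erase_of_mem (Finset.mem_univ x), Finset.card_univ]
  intro A hA B hB h
  have hA' := (Finset.mem_powersetCard.1 hA).1
  have hB' := (Finset.mem_powersetCard.1 hB).1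
  have hxA : x ∉ A := fun h => by simpa using hA' h
  have hxB : x ∉ B := fun h => by simpa using hB' h
  rw [← Finset.erase_insert hxA, ← Finset.erase_insert hxB]
  exact congrArg (fun s => Finset.erase s x) h

/-- For a supermodular `V` with `V ∅ = 0`, the expected value of a uniformly
random `r`-subset is at most the proportional share `(r/c)·V(N)`; hence the
expected interaction difference `ΔI = (r/c)·V(N) − E[V(S)]` is nonnegative. -/
theorem supermodular_expected_interaction_difference_nonneg
    {α : Type*} [Fintype α] [DecidableEq α] (r : ℕ) (hr : r ≤ Fintype.card α)
    (V : Finset α → ℝ) (hV0 : V ∅ = 0)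
    (hsuper : ∀ A B : Finset α, V A + V B ≤ V (A ∪ B) + V (A ∩ B)) :
    (∑ S ∈ Finset.univ.powersetCard r, V S) / (((Fintype.card α).choose r : ℝ)) ≤
      ((r : ℝ) / (Fintype.card α : ℝ)) * V Finset.univ ∧
    0 ≤ ((r : ℝ) / (Fintype.card α : ℝ)) * V Finset.univ -
      (∑ S ∈ Finset.univ.powersetCard r, V S) / (((Fintype.card α).choose r : ℝ)) := by
  rw [sub_nonneg, and_self]
  cases r with
  | zero => simp [hV0]
  | succ r =>
    obtain ⟨φ, h1, h2⟩ := aux_core V hV0 hsuper Finset.univ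
    have hsum : ∑ S ∈ (Finset.univ : Finset α).powersetCard (r + 1), V S ≤
        ((Fintype.card α - 1).choose r : ℝ) * V Finset.univ := by
      calc _ ≤ ∑ S ∈ (Finset.univ : Finset α).powersetCard (r + 1), ∑ x ∈ S, φ x :=
            Finset.sum_le_sum fun S _ => h1 S (Finset.subset_univ S)
        _ = ∑ S ∈ (Finset.univ : Finset α).powersetCard (r + 1),
              ∑ x : α, if x ∈ S then φ x else 0 := by
            simp
        _ = ∑ x : α, ((Fintype.card α - 1).choose r : ℝ) * φ x := by
            rw [Finset.sum_comm]
            refine Finset.sum_congr rfl fun x _ => ?_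
            rw [← Finset.sum_filter, Finset.sum_const, aux_card, nsmul_eq_mul]
        _ = _ := by rw [← Finset.mul_sum, h2]
    obtain ⟨c, hc⟩ : ∃ c, Fintype.card α = c + 1 := ⟨Fintype.card α - 1, by omega⟩
    rw [hc] at hsum hr ⊢
    simp only [Nat.add_sub_cancel] at hsum
    have hpos : (0 : ℝ) < ((c + 1).choose (r + 1) : ℝ) := by
      exact_mod_cast Nat.choose_pos hr
    have hid : ((c : ℝ) + 1) * (c.choose r : ℝ) = ((c + 1).choose (r + 1) : ℝ) * (r + 1) := by
      exact_mod_cast Nat.add_one_mul_choose_eq c r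
    rw [div_le_iff₀ hpos]
    refine hsum.trans (le_of_eq ?_)
    push_cast
    have : (c : ℝ) + 1 ≠ 0 := by positivity
    field_simp
    linear_combination V Finset.univ * hid
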